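/- If α ∈ Λ has E-degree p and β ∈ Λ has E-degree q with p + q > n, then for every natural number j one has Σ_{k=0}^{j} (j choose k) · ι_ξ^k(α) * ι_ξ^{j−k}(β) = 0. (General form of the paper's family of identities obtained by applying the k-fold contraction with the odd vector field ξ to forms of degree exceeding the dimension.) -/

import Mathlib

noncomputable section

open ExteriorAlgebra

variable (E G : Type) [AddCommGroup E] [Module ℝ E] [AddCommGroup G] [Module ℝ G]

/-- The ghost generator `θ = ι(0, g)`. -/
def ghost (g : G) : ExteriorAlgebra ℝ (E × G) := ExteriorAlgebra.ι ℝ ((0 : E), g)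

/-- The extension `f̃(e, g) = f(e)` of a covector on `E` to `E × G`. -/
def fTilde (f : Module.Dual ℝ E) : Module.Dual ℝ (E × G) := f.comp (LinearMap.fst ℝ E G)

/-- The odd contraction `ι_ξ x = Σ_i θ_i * ∂_i x`. -/
def iotaXi {k : ℕ} (g : Fin k → G) (f : Fin k → Module.Dual ℝ E) :
    ExteriorAlgebra ℝ (E × G) →ₗ[ℝ] ExteriorAlgebra ℝ (E × G) :=
  ∑ i, (LinearMap.mulLeft ℝ (ghost E G (g i))).comp
    (CliffordAlgebra.contractLeft (fTilde E G (f i)))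

/-- The algebra map `Λ(E) → Λ(E × G)` induced by `e ↦ (e, 0)`. -/
def inclE : ExteriorAlgebra ℝ E →ₐ[ℝ] ExteriorAlgebra ℝ (E × G) :=
  ExteriorAlgebra.lift ℝ ⟨(ExteriorAlgebra.ι ℝ).comp (LinearMap.inl ℝ E G),
    fun _ => ExteriorAlgebra.ι_sq_zero _⟩

/-- `x ∈ Λ(E × G)` has `E`-degree `p` if it is the image of an element of the `p`-th
exterior power of `E` under the algebra map induced by `e ↦ (e, 0)`. -/
def HasEDegree (p : ℕ) (x : ExteriorAlgebra ℝ (E × G)) : Prop :=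
  x ∈ Submodule.map (inclE E G).toLinearMap (⋀[ℝ]^p E)

theorem iotaXi_apply' {k : ℕ} (g : Fin k → G) (f : Fin k → Module.Dual ℝ E)
    (x : ExteriorAlgebra ℝ (E × G)) :
    iotaXi E G g f x = ∑ i, ExteriorAlgebra.ι ℝ ((0 : E), g i) *
      CliffordAlgebra.contractLeft (fTilde E G (f i)) x := by
  simp [iotaXi, ghost, LinearMap.sum_apply]

theorem iotaXi_ι_mul {k : ℕ} (g : Fin k → G) (f : Fin k → Module.Dual ℝ E)
    (m : E × G) (x : ExteriorAlgebra ℝ (E × G)) :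
    iotaXi E G g f (ExteriorAlgebra.ι ℝ m * x) =
      iotaXi E G g f (ExteriorAlgebra.ι ℝ m) * x
        + ExteriorAlgebra.ι ℝ m * iotaXi E G g f x := by
  rw [iotaXi_apply', iotaXi_apply', iotaXi_apply', Finset.sum_mul, Finset.mul_sum,
    ← Finset.sum_add_distrib]
  refine Finset.sum_congr rfl fun i _ => ?_
  have h1 : CliffordAlgebra.contractLeft (fTilde E G (f i)) (ExteriorAlgebra.ι ℝ m * x) =
      fTilde E G (f i) m • x - ExteriorAlgebra.ι ℝ m *
        CliffordAlgebra.contractLeft (fTilde E G (f i)) x :=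
    CliffordAlgebra.contractLeft_ι_mul (fTilde E G (f i)) m x
  have h2 : CliffordAlgebra.contractLeft (fTilde E G (f i)) (ExteriorAlgebra.ι ℝ m) =
      algebraMap ℝ (ExteriorAlgebra ℝ (E × G)) (fTilde E G (f i) m) :=
    CliffordAlgebra.contractLeft_ι (Q := (0 : QuadraticForm ℝ (E × G))) (fTilde E G (f i)) m
  have h3 : ExteriorAlgebra.ι ℝ ((0 : E), g i) * ExteriorAlgebra.ι ℝ m =
      - (ExteriorAlgebra.ι ℝ m * ExteriorAlgebra.ι ℝ ((0 : E), g i)) :=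
    eq_neg_of_add_eq_zero_left (ExteriorAlgebra.ι_add_mul_swap _ _)
  rw [h1, h2, mul_sub, ← mul_assoc, h3, mul_assoc _ (algebraMap ℝ _ _) x, ← Algebra.smul_def]
  rw [neg_mul, sub_neg_eq_add, mul_assoc]

theorem iotaXi_mul {k : ℕ} (g : Fin k → G) (f : Fin k → Module.Dual ℝ E)
    (x y : ExteriorAlgebra ℝ (E × G)) :
    iotaXi E G g f (x * y) = iotaXi E G g f x * y + x * iotaXi E G g f y := by
  induction x using CliffordAlgebra.left_induction with
  | algebraMap r =>
    have h : iotaXi E G g f (algebraMap ℝ _ r) = 0 := by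
      rw [iotaXi_apply']
      refine Finset.sum_eq_zero fun i _ => ?_
      erw [CliffordAlgebra.contractLeft_algebraMap, mul_zero]
    erw [h]
    rw [zero_mul, zero_add]
    erw [← Algebra.smul_def, ← Algebra.smul_def]
    rw [map_smul]
  | add a b ha hb => rw [add_mul, map_add, ha, hb, map_add, add_mul, add_mul]; abel
  | ι_mul x m hx =>
    change iotaXi E G g f (ExteriorAlgebra.ι ℝ m * x * y) =
      iotaXi E G g f (ExteriorAlgebra.ι ℝ m * x) * y
        + ExteriorAlgebra.ι ℝ m * x * iotaXi E G g f y
    rw [mul_assoc, iotaXi_ι_mul, hx, iotaXi_ι_mul, mul_add, add_mul, mul_assoc, mul_assoc,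
      mul_assoc, add_assoc]

theorem leibniz_pow_aux {A : Type} [Ring A] [Algebra ℝ A] (D : A →ₗ[ℝ] A)
    (hD : ∀ x y, D (x * y) = D x * y + x * D y) (j : ℕ) (a b : A) :
    ∑ i ∈ Finset.range (j + 1), j.choose i • ((D ^ i) a * (D ^ (j - i)) b) =
      (D ^ j) (a * b) := by
  let L : Module.End ℝ (TensorProduct ℝ A A) := LinearMap.rTensor A D
  let R : Module.End ℝ (TensorProduct ℝ A A) := LinearMap.lTensor A D
  have hc : Commute L R := by
    refine TensorProduct.ext' fun x y => ?_
    simp [L, R]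
  have key : ∀ (n : ℕ) (t : TensorProduct ℝ A A),
      LinearMap.mul' ℝ A (((L + R) ^ n) t) = (D ^ n) (LinearMap.mul' ℝ A t) := by
    intro n
    induction n with
    | zero => intro t; simp
    | succ n ih =>
      intro t
      rw [pow_succ, pow_succ, Module.End.mul_apply, Module.End.mul_apply, ih]
      congr 1
      induction t with
      | zero => simp
      | tmul x y => simp [L, R, hD]
      | add x y hx hy => rw [map_add, map_add, hx, hy, map_add, map_add]
  have := key j (TensorProduct.tmul ℝ a b)
  rw [hc.add_pow, LinearMap.mul'_apply] at this
  rw [← this, LinearMap.sum_apply, map_sum]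
  refine Finset.sum_congr rfl fun i _ => ?_
  rw [← nsmul_eq_mul', LinearMap.smul_apply, map_nsmul, Module.End.mul_apply]
  simp [L, R, LinearMap.rTensor_pow, LinearMap.lTensor_pow]

/-- If `α` has `E`-degree `p` and `β` has `E`-degree `q` with
`p + q > n`, then for every `j`, `Σ_{k=0}^{j} (j choose k) · ι_ξ^k(α) * ι_ξ^{j−k}(β) = 0`. -/
theorem iotaXi_pow_leibniz_vanish [FiniteDimensional ℝ E] [FiniteDimensional ℝ G]
    {k : ℕ} (g : Fin k → G) (f : Fin k → Module.Dual ℝ E)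
    (p q : ℕ) (α β : ExteriorAlgebra ℝ (E × G))
    (hα : HasEDegree E G p α) (hβ : HasEDegree E G q β)
    (hpq : p + q > Module.finrank ℝ E) (j : ℕ) :
    ∑ i ∈ Finset.range (j + 1),
      j.choose i • ((iotaXi E G g f ^ i) α * (iotaXi E G g f ^ (j - i)) β) = 0 := by
  rw [leibniz_pow_aux _ (iotaXi_mul E G g f)]
  obtain ⟨a, ha, rfl⟩ := hα
  obtain ⟨b, hb, rfl⟩ := hβ
  have hab : a * b ∈ ⋀[ℝ]^(p + q) E := by
    change a * b ∈ _ ^ (p + q)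
    rw [pow_add]
    exact Submodule.mul_mem_mul ha hb
  have hbot : (⋀[ℝ]^(p + q) E) = ⊥ := by
    rw [← Submodule.finrank_eq_zero (R := ℝ), exteriorPower.finrank_eq]
    exact Nat.choose_eq_zero_of_lt hpq
  rw [hbot, Submodule.mem_bot] at hab
  have : (inclE E G).toLinearMap a * (inclE E G).toLinearMap b = 0 := by
    rw [AlgHom.toLinearMap_apply, AlgHom.toLinearMap_apply, ← map_mul, hab, map_zero]
  rw [this, map_zero]
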